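/- Let P = {(u_1, u_2) ∈ ℝ² : u_1 ≥ 0, u_2 ≥ 0, 2 − u_1 + u_2 ≥ 0, 5 − u_2 ≥ 0, 1 + u_1 − u_2 ≥ 0} (the moment polytope of a two-point blowup of ℂP²), with normal vectors v_1 = (1,0), v_2 = (0,1), v_3 = (−1,1), v_4 = (0,−1), v_5 = (1,−1) and l_1(u) = u_1, l_2(u) = u_2, l_3(u) = 2 − u_1 + u_2, l_4(u) = 5 − u_2, l_5(u) = 1 + u_1 − u_2. Then Trop(P, (1,0)) ∩ Trop(P, (0,1)) = {(t, t − 1/2) : 2 ≤ t ≤ 4} ∪ {(1, 1)} as subsets of ℝ². -/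

import Mathlib

open scoped Classical

noncomputable section

/-- Integer inner product `⟨w, v⟩ = ∑ i, w i * v i` on `ℤ^n`. -/
def zdot {n : ℕ} (w v : Fin n → ℤ) : ℤ := ∑ i, w i * v i

/-- A lattice vector is primitive if the gcd of its entries is `1`. -/
def Primitive {n : ℕ} (w : Fin n → ℤ) : Prop := Finset.univ.gcd w = 1

/-- The affine function `l_j(u) = ⟨u, v_j⟩ - λ_j`. -/
def lf {n m : ℕ} (v : Fin m → Fin n → ℤ) (lam : Fin m → ℝ) (j : Fin m) (u : Fin n → ℝ) : ℝ :=
  (∑ i, u i * (v j i : ℝ)) - lam j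

/-- The polytope `P = {u : l_j(u) ≥ 0 for all j}`. -/
def Pset {n m : ℕ} (v : Fin m → Fin n → ℤ) (lam : Fin m → ℝ) : Set (Fin n → ℝ) :=
  {u | ∀ j, 0 ≤ lf v lam j u}

/-- The tropicalization of `P` relative to the lattice vector `w`: the set of points at which
the minimum of `{l_j(u) : ⟨w, v_j⟩ ≠ 0}` is attained by at least two distinct indices. -/
def TropRel {n m : ℕ} (v : Fin m → Fin n → ℤ) (lam : Fin m → ℝ) (w : Fin n → ℤ) :
    Set (Fin n → ℝ) :=
  {u | ∃ j₁ j₂ : Fin m, j₁ ≠ j₂ ∧ zdot w (v j₁) ≠ 0 ∧ zdot w (v j₂) ≠ 0 ∧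
        lf v lam j₁ u = lf v lam j₂ u ∧
        ∀ j : Fin m, zdot w (v j) ≠ 0 → lf v lam j₁ u ≤ lf v lam j u}

/-- Normal vectors of the moment polytope of a two-point blowup of `ℂP²`:
`v₁ = (1,0), v₂ = (0,1), v₃ = (-1,1), v₄ = (0,-1), v₅ = (1,-1)`. -/
def vC : Fin 5 → Fin 2 → ℤ := ![![1, 0], ![0, 1], ![-1, 1], ![0, -1], ![1, -1]]

/-- Constants so that `l₁ = u₁, l₂ = u₂, l₃ = 2 - u₁ + u₂, l₄ = 5 - u₂, l₅ = 1 + u₁ - u₂`. -/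
def lamC : Fin 5 → ℝ := ![0, 0, -2, -5, -1]

/-!
`Trop(P, (1,0))` is a tropical line: three rays meeting at `(3/2, 1)`, one for each pair among
`l₁, l₃, l₅`. `Trop(P, (0,1))` consists of the segment from `(2, 3/2)` to `(4, 7/2)`, on which
`l₃ = l₅`, with two rays leaving from each of its ends; the pair `l₂, l₄` contributes nothing.
The ray `l₃ = l₅` of the first curve meets the second exactly in that segment, the ray `l₁ = l₅`
meets it only at `(1, 1)`, and the ray `l₁ = l₃` misses it.
-/

/-- The minimum of `f` on `s` is attained at two or more points of `s`: the condition cutting out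
a tropical hypersurface when the `f i` are affine. -/
def MinAttainedTwiceOn {ι α : Type*} [Preorder α] (f : ι → α) (s : Set ι) : Prop :=
  ∃ i ∈ s, ∃ j ∈ s, i ≠ j ∧ f i = f j ∧ IsMinOn f s i

section MinAttainedTwiceOn

variable {ι α : Type*} [Preorder α] {f : ι → α} {a b c d : ι}

lemma minAttainedTwiceOn_triple (hab : a ≠ b) (hac : a ≠ c) (hbc : b ≠ c) :
    MinAttainedTwiceOn f {a, b, c} ↔
      (f a = f b ∧ f a ≤ f c) ∨ (f a = f c ∧ f a ≤ f b) ∨ (f b = f c ∧ f b ≤ f a) := by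
  simp only [MinAttainedTwiceOn, isMinOn_iff, Set.mem_insert_iff, Set.mem_singleton_iff,
    exists_eq_or_imp, exists_eq_left, forall_eq_or_imp, forall_eq]
  grind

lemma minAttainedTwiceOn_quadruple (hab : a ≠ b) (hac : a ≠ c) (had : a ≠ d) (hbc : b ≠ c)
    (hbd : b ≠ d) (hcd : c ≠ d) :
    MinAttainedTwiceOn f {a, b, c, d} ↔
      (f a = f b ∧ f a ≤ f c ∧ f a ≤ f d) ∨ (f a = f c ∧ f a ≤ f b ∧ f a ≤ f d) ∨
      (f a = f d ∧ f a ≤ f b ∧ f a ≤ f c) ∨ (f b = f c ∧ f b ≤ f a ∧ f b ≤ f d) ∨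
      (f b = f d ∧ f b ≤ f a ∧ f b ≤ f c) ∨ (f c = f d ∧ f c ≤ f a ∧ f c ≤ f b) := by
  simp only [MinAttainedTwiceOn, isMinOn_iff, Set.mem_insert_iff, Set.mem_singleton_iff,
    exists_eq_or_imp, exists_eq_left, forall_eq_or_imp, forall_eq]
  grind (splits := 20)

end MinAttainedTwiceOn

/-- The index set `J_w = {j : ⟨w, v_j⟩ ≠ 0}` of the affine functions entering `Trop(P, w)`. -/
def tropIndices {n m : ℕ} (v : Fin m → Fin n → ℤ) (w : Fin n → ℤ) : Set (Fin m) :=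
  {j | zdot w (v j) ≠ 0}

lemma mem_tropRel_iff {n m : ℕ} {v : Fin m → Fin n → ℤ} {lam : Fin m → ℝ} {w : Fin n → ℤ}
    {u : Fin n → ℝ} :
    u ∈ TropRel v lam w ↔ MinAttainedTwiceOn (fun j ↦ lf v lam j u) (tropIndices v w) := by
  simp only [TropRel, MinAttainedTwiceOn, tropIndices, isMinOn_iff, Set.mem_ofPred_eq]
  grind

lemma lf_vC_lamC (j : Fin 5) (x y : ℝ) :
    lf vC lamC j ![x, y] = ![x, y, 2 - x + y, 5 - y, 1 + x - y] j := by
  fin_cases j <;> simp [lf, vC, lamC] <;> ring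

-- `Fin 5` starts at `0`, so `{0, 2, 4}` is the paper's `{1, 3, 5}`.
lemma tropIndices_vC_one_zero : tropIndices vC ![1, 0] = {0, 2, 4} := by
  ext j
  fin_cases j <;> simp [tropIndices, zdot, vC]

lemma tropIndices_vC_zero_one : tropIndices vC ![0, 1] = {1, 2, 3, 4} := by
  ext j
  fin_cases j <;> simp [tropIndices, zdot, vC]

lemma mem_tropRel_one_zero_iff {x y : ℝ} :
    ![x, y] ∈ TropRel vC lamC ![1, 0] ↔
      (y = 2 * x - 2 ∧ x ≤ 3 / 2) ∨ (y = 1 ∧ x ≤ 3 / 2) ∨ (y = x - 1 / 2 ∧ 3 / 2 ≤ x) := by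
  rw [mem_tropRel_iff, tropIndices_vC_one_zero,
    minAttainedTwiceOn_triple (by decide) (by decide) (by decide)]
  simp only [lf_vC_lamC, Matrix.cons_val]
  refine or_congr ?l₁_eq_l₃ (or_congr ?l₁_eq_l₅ ?l₃_eq_l₅) <;>
    constructor <;> rintro ⟨_, _⟩ <;> constructor <;> linarith

lemma mem_tropRel_zero_one_iff {x y : ℝ} :
    ![x, y] ∈ TropRel vC lamC ![0, 1] ↔
      (x = 2 ∧ y ≤ 3 / 2) ∨ (x = 2 * y - 1 ∧ x ≤ 2) ∨ (x = 2 * y - 3 ∧ 4 ≤ x) ∨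
      (y = x - 1 / 2 ∧ 2 ≤ x ∧ x ≤ 4) ∨ (x = 4 ∧ 7 / 2 ≤ y) := by
  rw [mem_tropRel_iff, tropIndices_vC_zero_one, minAttainedTwiceOn_quadruple (by decide)
    (by decide) (by decide) (by decide) (by decide) (by decide)]
  simp only [lf_vC_lamC, Matrix.cons_val]
  have not_l₂_eq_l₄ : ¬(y = 5 - y ∧ y ≤ 2 - x + y ∧ y ≤ 1 + x - y) := by
    rintro ⟨_, _, _⟩
    linarith
  rw [or_iff_right not_l₂_eq_l₄]
  refine or_congr ?l₂_eq_l₃ <| or_congr ?l₂_eq_l₅ <| or_congr ?l₃_eq_l₄ <|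
    or_congr ?l₃_eq_l₅ ?l₄_eq_l₅ <;> grind

/-- For the moment polytope
`P = {u : u₁ ≥ 0, u₂ ≥ 0, 2 - u₁ + u₂ ≥ 0, 5 - u₂ ≥ 0, 1 + u₁ - u₂ ≥ 0}` of a two-point
blowup of `ℂP²`,
`Trop(P,(1,0)) ∩ Trop(P,(0,1)) = {(t, t - 1/2) : 2 ≤ t ≤ 4} ∪ {(1,1)}` as subsets of `ℝ²`. -/
theorem statement15 :
    TropRel vC lamC ![1, 0] ∩ TropRel vC lamC ![0, 1]
    = {u : Fin 2 → ℝ | ∃ t : ℝ, 2 ≤ t ∧ t ≤ 4 ∧ u = ![t, t - 1/2]} ∪ {![1, 1]} := by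
  ext u
  obtain ⟨x, y, rfl⟩ : ∃ x y : ℝ, u = ![x, y] := ⟨u 0, u 1, (FinVec.etaExpand_eq u).symm⟩
  rw [Set.mem_inter_iff, mem_tropRel_one_zero_iff, mem_tropRel_zero_one_iff]
  constructor
  · rintro ⟨⟨rfl, _⟩ | ⟨rfl, _⟩ | ⟨rfl, -⟩, mem_zero_one⟩
    · rcases mem_zero_one with h | h | h | h | h <;> linarith [h.1, h.2]
    · have x_eq_one : x = 1 := by
        rcases mem_zero_one with h | h | h | h | h <;> linarith [h.1, h.2]
      exact .inr (by rw [x_eq_one]; rfl)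
    · have x_mem_Icc : 2 ≤ x ∧ x ≤ 4 := by
        rcases mem_zero_one with h | h | h | h | h <;> constructor <;> linarith [h.1, h.2]
      exact .inl ⟨x, x_mem_Icc.1, x_mem_Icc.2, rfl⟩
  · rintro (⟨t, two_le, le_four, h⟩ | h)
    · obtain ⟨rfl, rfl⟩ : x = t ∧ y = t - 1 / 2 := ⟨congrFun h 0, congrFun h 1⟩
      exact ⟨.inr (.inr ⟨rfl, by linarith⟩), .inr (.inr (.inr (.inl ⟨rfl, two_le, le_four⟩)))⟩
    · obtain ⟨rfl, rfl⟩ : x = 1 ∧ y = 1 := ⟨congrFun h 0, congrFun h 1⟩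
      norm_num
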